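/- Let n ∈ ℕ, σ ∈ {0,1}^n, and let μ_{j,m} be the Haar coefficients of the local discrepancy of the digit shifted Hammersley point set R_{n,σ} with N = 2^n points. If j = (j_1,j_2) ∈ ℕ_0^2 with j_1 + j_2 < n − 1, then |μ_{j,m}| = 2^{−2(n+1)} for all m ∈ D_j. -/

import Mathlib

open MeasureTheory

/-- The real value of a binary digit. -/
noncomputable def bval (b : Bool) : ℝ := if b then 1 else 0

/-- The two-dimensional digit shifted Hammersley point set with `2^n` points,
indexed by the digit vectors `t : Fin n → Bool`.  The index `i : Fin n`
corresponds to the digit `t_{i+1}` of the paper. -/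
noncomputable def hammersleyShifted (n : ℕ) (σ : Fin n → Bool) (t : Fin n → Bool) : ℝ × ℝ :=
  (∑ i : Fin n, bval (t i) / 2 ^ (n - i.val),
   ∑ i : Fin n, bval (t i != σ i) / 2 ^ (i.val + 1))

/-- Number of points of the (indexed) point set `P` lying in `[0,t₁) × [0,t₂)`. -/
noncomputable def countIn {ι : Type*} [Fintype ι] (P : ι → ℝ × ℝ) (t : ℝ × ℝ) : ℕ :=
  (Finset.univ.filter
    (fun k => 0 ≤ (P k).1 ∧ (P k).1 < t.1 ∧ 0 ≤ (P k).2 ∧ (P k).2 < t.2)).card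

/-- The local discrepancy `D_N(P,t) = A_N([0,t),P)/N - t₁t₂` of an indexed point set. -/
noncomputable def localDisc {ι : Type*} [Fintype ι] (P : ι → ℝ × ℝ) (t : ℝ × ℝ) : ℝ :=
  (countIn P t : ℝ) / (Fintype.card ι) - t.1 * t.2

/-- The `L_p`-discrepancy of an indexed point set. -/
noncomputable def LpDisc (p : ℝ) {ι : Type*} [Fintype ι] (P : ι → ℝ × ℝ) : ℝ :=
  (∫ t in Set.Icc (0 : ℝ × ℝ) 1, |localDisc P t| ^ p) ^ (1 / p)

/-- One-dimensional `L∞`-normalized Haar function `h_{j,m}`, with `j ∈ ℤ`, `j = -1`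
giving the indicator of `[0,1)` and `j ≥ 0` the usual Haar function on `I_{j,m}`. -/
noncomputable def haar1 (j : ℤ) (m : ℕ) (x : ℝ) : ℝ :=
  if j = -1 then (if 0 ≤ x ∧ x < 1 then 1 else 0)
  else if (2 * m : ℝ) / 2 ^ (j.toNat + 1) ≤ x ∧ x < (2 * m + 1 : ℝ) / 2 ^ (j.toNat + 1) then 1
  else if (2 * m + 1 : ℝ) / 2 ^ (j.toNat + 1) ≤ x ∧ x < (2 * m + 2 : ℝ) / 2 ^ (j.toNat + 1) then -1
  else 0

/-- Two-dimensional (tensor product) Haar function. -/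
noncomputable def haar2 (j : ℤ × ℤ) (m : ℕ × ℕ) (x : ℝ × ℝ) : ℝ :=
  haar1 j.1 m.1 x.1 * haar1 j.2 m.2 x.2

/-- One-dimensional dyadic interval `I_{j,m}` (with `I_{-1,0} = [0,1)`). -/
noncomputable def dyadicI (j : ℤ) (m : ℕ) : Set ℝ :=
  if j = -1 then Set.Ico (0 : ℝ) 1
  else Set.Ico ((m : ℝ) / 2 ^ j.toNat) ((m + 1 : ℝ) / 2 ^ j.toNat)

/-- Haar coefficient `μ_{j,m} = ∫_{[0,1]²} D_N(P,t) h_{j,m}(t) dt` of the local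
discrepancy of an indexed point set. -/
noncomputable def haarCoeff {ι : Type*} [Fintype ι] (P : ι → ℝ × ℝ) (j : ℤ × ℤ) (m : ℕ × ℕ) : ℝ :=
  ∫ t in Set.Icc (0 : ℝ × ℝ) 1, localDisc P t * haar2 j m t

/-- Number of zero components of the shift `σ`. -/
noncomputable def zeroCount {n : ℕ} (σ : Fin n → Bool) : ℕ :=
  (Finset.univ.filter (fun j => σ j = false)).card

/-- The symmetrized digit shifted Hammersley point set `R_{n,σ} ∪ R_{n,σ⊕1}`
with `2^(n+1)` points, indexed by `Bool × (Fin n → Bool)`. -/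
noncomputable def hammersleySym (n : ℕ) (σ : Fin n → Bool) :
    Bool × (Fin n → Bool) → ℝ × ℝ :=
  fun bt => if bt.1 then hammersleyShifted n (fun i => !(σ i)) bt.2
            else hammersleyShifted n σ bt.2

/-- The multiset `R_{n,σ} ∪ {(x, 1-y) : (x,y) ∈ R_{n,σ}}` with `2^(n+1)` points
(counted with multiplicity), indexed by `Bool × (Fin n → Bool)`. -/
noncomputable def hammersleySymTilde (n : ℕ) (σ : Fin n → Bool) :
    Bool × (Fin n → Bool) → ℝ × ℝ :=
  fun bt => if bt.1 then ((hammersleyShifted n σ bt.2).1, 1 - (hammersleyShifted n σ bt.2).2)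
            else hammersleyShifted n σ bt.2

noncomputable def tentT (u : ℝ) : ℝ := max (1 - u) 0 + max (-u) 0 - 2 * max (1/2 - u) 0

lemma tentT_le {u : ℝ} (h : u ≤ 0) : tentT u = 0 := by
  unfold tentT
  rw [max_eq_left (by linarith), max_eq_left (by linarith), max_eq_left (by linarith)]; ring

lemma tentT_ge {u : ℝ} (h : 1 ≤ u) : tentT u = 0 := by
  unfold tentT
  rw [max_eq_right (by linarith), max_eq_right (by linarith), max_eq_right (by linarith)]; ring

lemma tentT_left {u : ℝ} (h : 0 ≤ u) (h' : u ≤ 1/2) : tentT u = u := by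
  unfold tentT
  rw [max_eq_left (by linarith), max_eq_right (by linarith), max_eq_left (by linarith)]; ring

lemma tentT_right {u : ℝ} (h : 1/2 ≤ u) (h' : u ≤ 1) : tentT u = 1 - u := by
  unfold tentT
  rw [max_eq_left (by linarith), max_eq_right (by linarith), max_eq_right (by linarith)]; ring

noncomputable def HX (n : ℕ) (t : Fin n → Bool) : ℝ := ∑ i : Fin n, bval (t i) / 2 ^ (n - i.val)
noncomputable def HY (n : ℕ) (σ t : Fin n → Bool) : ℝ :=
  ∑ i : Fin n, bval (t i != σ i) / 2 ^ (i.val + 1)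

lemma bval_nonneg (b : Bool) : 0 ≤ bval b := by cases b <;> simp [bval]
lemma bval_le (b : Bool) : bval b ≤ 1 := by cases b <;> simp [bval]

lemma HX_snoc (n : ℕ) (s : Fin n → Bool) (b : Bool) :
    HX (n+1) (Fin.snoc s b : Fin (n+1) → Bool) = bval b / 2 + HX n s / 2 := by
  unfold HX
  rw [Fin.sum_univ_castSucc, add_comm, Finset.sum_div]
  congr 1
  · simp
  · apply Finset.sum_congr rfl
    intro i _
    have : n + 1 - i.val = (n - i.val) + 1 := by omega
    simp [this, pow_succ, div_div]

lemma HX_cons (n : ℕ) (s : Fin n → Bool) (a : Bool) :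
    HX (n+1) (Fin.cons a s : Fin (n+1) → Bool) = bval a / 2 ^ (n+1) + HX n s := by
  unfold HX
  rw [Fin.sum_univ_succ]
  simp

lemma HY_snoc (n : ℕ) (σ : Fin (n+1) → Bool) (s : Fin n → Bool) (b : Bool) :
    HY (n+1) σ (Fin.snoc s b : Fin (n+1) → Bool) =
      bval (b != σ (Fin.last n)) / 2 ^ (n+1) + HY n (fun i => σ i.castSucc) s := by
  unfold HY
  rw [Fin.sum_univ_castSucc, add_comm]
  simp

lemma HY_cons (n : ℕ) (σ : Fin (n+1) → Bool) (s : Fin n → Bool) (a : Bool) :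
    HY (n+1) σ (Fin.cons a s : Fin (n+1) → Bool) =
      bval (a != σ 0) / 2 + HY n (fun i => σ i.succ) s / 2 := by
  unfold HY
  rw [Fin.sum_univ_succ, Finset.sum_div]
  simp [pow_succ, div_div]

lemma HX_nonneg (n : ℕ) (t : Fin n → Bool) : 0 ≤ HX n t :=
  Finset.sum_nonneg fun i _ => div_nonneg (bval_nonneg _) (by positivity)
lemma HY_nonneg (n : ℕ) (σ t : Fin n → Bool) : 0 ≤ HY n σ t :=
  Finset.sum_nonneg fun i _ => div_nonneg (bval_nonneg _) (by positivity)

lemma HX_le (n : ℕ) (t : Fin n → Bool) : HX n t + 1 / 2 ^ n ≤ 1 := by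
  induction n with
  | zero => simp [HX]
  | succ n ih =>
    have h := HX_snoc n (Fin.init t) (t (Fin.last n))
    rw [Fin.snoc_init_self] at h
    have := ih (Fin.init t)
    have := bval_le (t (Fin.last n))
    rw [h, pow_succ, ← div_div]
    linarith

lemma HY_le (n : ℕ) (σ t : Fin n → Bool) : HY n σ t + 1 / 2 ^ n ≤ 1 := by
  induction n with
  | zero => simp [HY]
  | succ n ih =>
    have h := HY_cons n σ (Fin.tail t) (t 0)
    rw [Fin.cons_self_tail] at h
    have := ih (fun i => σ i.succ) (Fin.tail t)
    have := bval_le (t 0 != σ 0)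
    rw [h, pow_succ, ← div_div]
    linarith

lemma sum_snoc (n : ℕ) (f : (Fin (n+1) → Bool) → ℝ) :
    ∑ t, f t = ∑ s : Fin n → Bool, (f (Fin.snoc s false : Fin (n+1) → Bool) + f (Fin.snoc s true : Fin (n+1) → Bool)) := by
  rw [← (Fin.snocEquiv (fun _ : Fin (n+1) => Bool)).sum_comp, Fintype.sum_prod_type_right]
  apply Finset.sum_congr rfl
  intro s _
  simp [add_comm, Fin.snocEquiv]

lemma sum_cons (n : ℕ) (f : (Fin (n+1) → Bool) → ℝ) :
    ∑ t, f t = ∑ s : Fin n → Bool, (f (Fin.cons false s : Fin (n+1) → Bool) + f (Fin.cons true s : Fin (n+1) → Bool)) := by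
  rw [← (Fin.consEquiv (fun _ : Fin (n+1) => Bool)).sum_comp, Fintype.sum_prod_type_right]
  apply Finset.sum_congr rfl
  intro s _
  simp [add_comm, Fin.consEquiv]

lemma tent_bit (b : Bool) {w : ℝ} (h0 : 0 ≤ w) (h1 : w ≤ 1) :
    tentT (bval b / 2 + w / 2) = 1/4 + (1 - 2 * bval b) * (w - 1/2) / 2 := by
  cases b
  · rw [tentT_left] <;> simp [bval] <;> linarith
  · rw [tentT_right] <;> simp [bval] <;> linarith

lemma tent_bit_scale (j m : ℕ) (b : Bool) {w : ℝ} (h0 : 0 ≤ w) (h1 : w ≤ 1) (hm : m < 2 ^ (j+1)) :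
    tentT (2 ^ (j+1) * (bval b / 2 + w / 2) - m) =
      if b = decide (2 ^ j ≤ m) then tentT (2 ^ j * w - ((m - if b then 2 ^ j else 0 : ℕ) : ℝ)) else 0 := by
  have hp : (0:ℝ) < 2 ^ j := by positivity
  have e : (2:ℝ) ^ (j+1) * (bval b / 2 + w / 2) = 2 ^ j * bval b + 2 ^ j * w := by ring
  have hw : (2:ℝ) ^ j * w ≤ 2 ^ j := by nlinarith
  have hw0 : 0 ≤ (2:ℝ) ^ j * w := by positivity
  rw [e]
  by_cases h : 2 ^ j ≤ m
  · cases b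
    · have : (2:ℝ) ^ j ≤ m := by exact_mod_cast h
      simp [h, bval]
      apply tentT_le; linarith
    · simp [h, bval]
      congr 1; ring
  · cases b
    · simp [h, bval]
    · have : (m:ℝ) + 1 ≤ 2 ^ j := by exact_mod_cast (not_le.mp h)
      simp [h, bval]
      apply tentT_ge; linarith

lemma core_base (k : ℕ) (σ : Fin (k+2) → Bool) (ε δ : ℝ) (hε : 0 ≤ ε) (hε1 : ε ≤ 1)
    (hδ : 0 ≤ δ) (hδ1 : δ ≤ 1) :
    |∑ t : Fin (k+2) → Bool, tentT (HX _ t + ε / 2 ^ (k+2)) * tentT (HY _ σ t + δ / 2 ^ (k+2))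
      - 2 ^ k / 4| = 1 / 2 ^ (k+4) := by
  have key : ∀ (s : Fin k → Bool) (a b : Bool),
      tentT (HX (k+2) (Fin.snoc (Fin.cons a s : Fin (k+1) → Bool) b : Fin (k+2) → Bool) + ε / 2 ^ (k+2)) *
      tentT (HY (k+2) σ (Fin.snoc (Fin.cons a s : Fin (k+1) → Bool) b : Fin (k+2) → Bool) + δ / 2 ^ (k+2)) =
      (1/4 + (1 - 2 * bval b) * (HX k s + (bval a + ε) / 2 ^ (k+1) - 1/2) / 2) *
      (1/4 + (1 - 2 * bval (a != σ 0)) * (HY k (fun i => σ i.succ.castSucc) s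
        + (bval (b != σ (Fin.last _)) + δ) / 2 ^ (k+1) - 1/2) / 2) := by
    intro s a b
    have gen : ∀ (z : ℝ) (c : Bool) (e : ℝ), 0 ≤ e → e ≤ 1 → 0 ≤ z → z + 1 / 2 ^ k ≤ 1 →
        0 ≤ z + (bval c + e) / 2 ^ (k+1) ∧ z + (bval c + e) / 2 ^ (k+1) ≤ 1 := by
      intro z c e h0 h1 hz hz1
      have := bval_nonneg c
      have := bval_le c
      refine ⟨by positivity, ?_⟩
      have : (bval c + e) / 2 ^ (k+1) ≤ 2 / 2 ^ (k+1) := by gcongr; linarith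
      have e2 : (2:ℝ) / 2 ^ (k+1) = 1 / 2 ^ k := by rw [pow_succ]; field_simp
      linarith
    rw [HX_snoc, HX_cons, HY_snoc, HY_cons]
    have e1 : bval b / 2 + (bval a / 2 ^ (k + 1) + HX k s) / 2 + ε / 2 ^ (k + 2) =
      bval b / 2 + (HX k s + (bval a + ε) / 2 ^ (k+1)) / 2 := by
      rw [pow_succ 2 (k+1)]; field_simp; ring
    have e2 : bval (b != σ (Fin.last (k + 1))) / 2 ^ (k + 1 + 1) +
        (bval (a != σ (Fin.castSucc 0)) / 2 + HY k (fun i => σ i.succ.castSucc) s / 2) +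
          δ / 2 ^ (k + 2) = bval (a != σ 0) / 2 + (HY k (fun i => σ i.succ.castSucc) s
        + (bval (b != σ (Fin.last _)) + δ) / 2 ^ (k+1)) / 2 := by
      rw [Fin.castSucc_zero, pow_succ 2 (k+1)]; field_simp; ring
    rw [e1, e2]
    obtain ⟨p1, p2⟩ := gen (HX k s) a ε hε hε1 (HX_nonneg _ _) (HX_le _ _)
    obtain ⟨q1, q2⟩ := gen (HY k (fun i => σ i.succ.castSucc) s) (b != σ (Fin.last _)) δ hδ hδ1
      (HY_nonneg _ _ _) (HY_le _ _ _)
    rw [tent_bit _ p1 p2, tent_bit _ q1 q2]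
  rw [sum_snoc, sum_cons]
  simp only [key]
  rw [Finset.sum_congr rfl (g := fun _ => (1:ℝ)/4 + (1 - 2 * bval (σ 0)) * (1 - 2 * bval (σ (Fin.last _))) / 2 ^ (2*k+4))]
  · rw [Finset.sum_const]
    simp only [Finset.card_univ, Fintype.card_fun, Fintype.card_bool, Fintype.card_fin, nsmul_eq_mul, Nat.cast_pow, Nat.cast_ofNat]
    have : (2:ℝ) ^ k * (1/4 + (1 - 2 * bval (σ 0)) * (1 - 2 * bval (σ (Fin.last _))) / 2 ^ (2*k+4)) - 2 ^ k / 4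
      = (1 - 2 * bval (σ 0)) * (1 - 2 * bval (σ (Fin.last _))) * (1 / 2 ^ (k+4)) := by
      have : (2:ℝ) ^ (2*k+4) = 2 ^ k * 2 ^ (k+4) := by rw [← pow_add]; congr 1; ring
      rw [this]; field_simp; ring
    rw [this, abs_mul, abs_mul, abs_of_pos (show (0:ℝ) < 1 / 2 ^ (k+4) by positivity)]
    have hb : ∀ b, |1 - 2 * bval b| = 1 := by intro b; cases b <;> norm_num [bval]
    rw [hb, hb]; ring
  · intro s _
    have : (2:ℝ) ^ (2*k+4) = 4 * (2 ^ (k+1)) ^ 2 := by ring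
    rw [this]
    have hp : (2:ℝ) ^ (k+1) ≠ 0 := by positivity
    generalize (2:ℝ) ^ (k+1) = p at hp
    generalize σ 0 = c
    generalize σ (Fin.last (k+1)) = d
    cases c <;> cases d <;> simp [bval] <;> field_simp <;> ring

lemma core (j1 j2 k n : ℕ) (hn : n = k + 2 + j1 + j2) (σ : Fin n → Bool) (m1 m2 : ℕ)
    (hm1 : m1 < 2 ^ j1) (hm2 : m2 < 2 ^ j2)
    (ε δ : ℝ) (hε : 0 ≤ ε) (hε1 : ε ≤ 1) (hδ : 0 ≤ δ) (hδ1 : δ ≤ 1) :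
    |∑ t : Fin n → Bool, tentT (2 ^ j1 * (HX _ t + ε / 2 ^ n) - m1) *
        tentT (2 ^ j2 * (HY _ σ t + δ / 2 ^ n) - m2)
      - 2 ^ k / 4| = 1 / 2 ^ (k+4) := by
  have gen : ∀ (n : ℕ) (z e : ℝ), 0 ≤ e → e ≤ 1 → 0 ≤ z → z + 1 / 2 ^ n ≤ 1 →
        0 ≤ z + e / 2 ^ n ∧ z + e / 2 ^ n ≤ 1 := by
      intro n z e h0 h1 hz hz1
      refine ⟨by positivity, ?_⟩
      have : e / 2 ^ n ≤ 1 / 2 ^ n := by gcongr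
      linarith
  induction j1 generalizing n m1 ε δ with
  | succ j1 ih =>
    obtain ⟨n, rfl⟩ : ∃ n', n = n' + 1 := ⟨n - 1, by omega⟩
    rw [sum_snoc]
    set c := decide (2 ^ j1 ≤ m1) with hc
    set M := m1 - (if c then 2 ^ j1 else 0) with hM
    have hM' : M < 2 ^ j1 := by
      by_cases h : 2 ^ j1 ≤ m1
      · simp [hM, hc, h]; omega
      · simp [hM, hc, h]; omega
    have hb := bval_nonneg (c != σ (Fin.last n))
    have hb' := bval_le (c != σ (Fin.last n))
    have := ih n (by omega) (fun i => σ i.castSucc) M hM' ε ((bval (c != σ (Fin.last n)) + δ) / 2)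
      hε hε1 (by linarith) (by linarith)
    rw [← this]
    congr 2
    apply Finset.sum_congr rfl
    intro s _
    obtain ⟨p1, p2⟩ := gen n (HX n s) ε hε hε1 (HX_nonneg _ _) (HX_le _ _)
    have eX : ∀ b, HX (n+1) (Fin.snoc s b : Fin (n+1) → Bool) + ε / 2 ^ (n+1)
      = bval b / 2 + (HX n s + ε / 2 ^ n) / 2 := by
      intro b; rw [HX_snoc, pow_succ]; field_simp; ring
    have eY : ∀ b, HY (n+1) σ (Fin.snoc s b : Fin (n+1) → Bool) + δ / 2 ^ (n+1)
      = HY n (fun i => σ i.castSucc) s + ((bval (b != σ (Fin.last n)) + δ) / 2) / 2 ^ n := by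
      intro b; rw [HY_snoc, pow_succ]; field_simp; ring
    rw [eX, eX, eY, eY, tent_bit_scale j1 m1 _ p1 p2 hm1, tent_bit_scale j1 m1 _ p1 p2 hm1, ← hc]
    clear_value c
    clear_value M
    subst hM
    cases c <;> simp
  | zero =>
  induction j2 generalizing n m2 ε δ with
  | succ j2 ih =>
    obtain ⟨n, rfl⟩ : ∃ n', n = n' + 1 := ⟨n - 1, by omega⟩
    rw [sum_cons]
    set c := decide (2 ^ j2 ≤ m2) with hc
    set M := m2 - (if c then 2 ^ j2 else 0) with hM
    have hM' : M < 2 ^ j2 := by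
      by_cases h : 2 ^ j2 ≤ m2
      · simp [hM, hc, h]; omega
      · simp [hM, hc, h]; omega
    have hb := bval_nonneg (c != σ 0)
    have hb' := bval_le (c != σ 0)
    have hb := bval_nonneg (c ^^ σ 0)
    have hb' := bval_le (c ^^ σ 0)
    have := ih M hM' n (by omega) (fun i => σ i.succ) ((bval (c ^^ σ 0) + ε) / 2) δ
      (by linarith) (by linarith) hδ hδ1
    rw [← this]
    congr 2
    apply Finset.sum_congr rfl
    intro s _
    obtain ⟨p1, p2⟩ := gen n (HY n (fun i => σ i.succ) s) δ hδ hδ1 (HY_nonneg _ _ _) (HY_le _ _ _)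
    have eX : ∀ b, HX (n+1) (Fin.cons b s : Fin (n+1) → Bool) + ε / 2 ^ (n+1)
      = HX n s + ((bval b + ε) / 2) / 2 ^ n := by
      intro b; rw [HX_cons, pow_succ]; field_simp; ring
    have eY : ∀ b, HY (n+1) σ (Fin.cons b s : Fin (n+1) → Bool) + δ / 2 ^ (n+1)
      = bval (b != σ 0) / 2 + (HY n (fun i => σ i.succ) s + δ / 2 ^ n) / 2 := by
      intro b; rw [HY_cons, pow_succ]; field_simp; ring
    rw [eX, eX, eY, eY, tent_bit_scale j2 m2 _ p1 p2 hm2, tent_bit_scale j2 m2 _ p1 p2 hm2, ← hc]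
    clear_value c
    clear_value M
    subst hM
    generalize σ 0 = d
    cases c <;> cases d <;> simp
  | zero =>
    subst hn
    obtain rfl : m1 = 0 := by simpa using hm1
    obtain rfl : m2 = 0 := by simpa using hm2
    simpa using core_base k σ ε δ hε hε1 hδ hδ1

/-! integrals -/

lemma haar1_eq (j m : ℕ) (x : ℝ) :
    haar1 (j : ℤ) m x =
      (Set.Ico ((2 * m : ℝ) / 2 ^ (j + 1)) ((2 * m + 1 : ℝ) / 2 ^ (j + 1))).indicator 1 x -
      (Set.Ico ((2 * m + 1 : ℝ) / 2 ^ (j + 1)) ((2 * m + 2 : ℝ) / 2 ^ (j + 1))).indicator 1 x := by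
  have h : (j : ℤ) ≠ -1 := by omega
  simp only [haar1, h, if_false, Int.toNat_natCast, Set.indicator, Set.mem_Ico, Pi.one_apply]
  split_ifs with h1 h2 <;> first | (exfalso; linarith [h1.2, h2.1]) | norm_num

lemma integral_haar (j m : ℕ) (hm : m < 2 ^ j) (f : ℝ → ℝ) (hf : IntegrableOn f (Set.Icc 0 1)) :
    IntegrableOn (fun t => f t * haar1 j m t) (Set.Icc 0 1) ∧
    ∫ t in Set.Icc (0:ℝ) 1, f t * haar1 j m t =
      (∫ t in Set.Ico ((2 * m : ℝ) / 2 ^ (j + 1)) ((2 * m + 1 : ℝ) / 2 ^ (j + 1)), f t) -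
      ∫ t in Set.Ico ((2 * m + 1 : ℝ) / 2 ^ (j + 1)) ((2 * m + 2 : ℝ) / 2 ^ (j + 1)), f t := by
  have hm' : (m : ℝ) + 1 ≤ 2 ^ j := by exact_mod_cast hm
  have hp : (0:ℝ) < 2 ^ (j+1) := by positivity
  have hsub : ∀ p q : ℝ, 0 ≤ p → q ≤ 2 ^ (j+1) →
      Set.Ico (p / 2 ^ (j+1)) (q / 2 ^ (j+1)) ⊆ Set.Icc 0 1 := by
    intro p q h0 h1 x hx
    refine ⟨le_trans (by positivity) hx.1, hx.2.le.trans ?_⟩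
    rw [div_le_one hp]; exact h1
  have hA := hsub (2*m) (2*m+1) (by positivity) (by rw [pow_succ]; linarith)
  have hB := hsub (2*m+1) (2*m+2) (by positivity) (by rw [pow_succ]; linarith)
  have e : (fun t => f t * haar1 j m t) = fun t =>
      (Set.Ico ((2 * m : ℝ) / 2 ^ (j + 1)) ((2 * m + 1 : ℝ) / 2 ^ (j + 1))).indicator f t -
      (Set.Ico ((2 * m + 1 : ℝ) / 2 ^ (j + 1)) ((2 * m + 2 : ℝ) / 2 ^ (j + 1))).indicator f t := by
    funext t
    rw [haar1_eq, mul_sub]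
    simp [Set.indicator]
  have iA := hf.indicator (measurableSet_Ico (a := (2 * m : ℝ) / 2 ^ (j + 1)) (b := (2 * m + 1 : ℝ) / 2 ^ (j + 1)))
  have iB := hf.indicator (measurableSet_Ico (a := (2 * m + 1 : ℝ) / 2 ^ (j + 1)) (b := (2 * m + 2 : ℝ) / 2 ^ (j + 1)))
  rw [e]
  refine ⟨iA.sub iB, ?_⟩
  rw [integral_sub iA iB, setIntegral_indicator measurableSet_Ico, setIntegral_indicator measurableSet_Ico,
    Set.inter_eq_self_of_subset_right hA, Set.inter_eq_self_of_subset_right hB]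

lemma integral_step (x p q : ℝ) (h : p ≤ q) :
    ∫ t in Set.Ico p q, (if x < t then (1:ℝ) else 0) = max (q - x) 0 - max (p - x) 0 := by
  have e : (fun t => if x < t then (1:ℝ) else 0) = (Set.Ioi x).indicator 1 := by
    funext t; simp [Set.indicator]
  rw [e, setIntegral_indicator measurableSet_Ioi]
  simp only [Pi.one_apply, integral_const, smul_eq_mul, mul_one, measureReal_restrict_apply MeasurableSet.univ, Set.univ_inter]
  rcases le_total q x with h1 | h1
  · have : Set.Ico p q ∩ Set.Ioi x = ∅ := by
      ext t; simp; intros; linarith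
    rw [this, max_eq_right (by linarith), max_eq_right (by linarith)]; simp
  · rcases lt_or_ge x p with h2 | h2
    · have : Set.Ico p q ∩ Set.Ioi x = Set.Ico p q := by
        ext t; simp; intros; linarith
      rw [this, max_eq_left (by linarith), max_eq_left (by linarith)]; simp [h]
    · have : Set.Ico p q ∩ Set.Ioi x = Set.Ioo x q := by
        ext t; simp; constructor
        · rintro ⟨⟨_, _⟩, _⟩; constructor <;> linarith
        · rintro ⟨_, _⟩; refine ⟨⟨?_, ?_⟩, ?_⟩ <;> linarith
      rw [this, max_eq_left (by linarith), max_eq_right (by linarith)]; simp [h1]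

lemma integral_id' (p q : ℝ) (h : p ≤ q) :
    ∫ t in Set.Ico p q, t = (q^2 - p^2)/2 := by
  rw [integral_Ico_eq_integral_Ioc, ← intervalIntegral.integral_of_le h, integral_id]

lemma int_step (j m : ℕ) (hm : m < 2 ^ j) (x : ℝ) :
    IntegrableOn (fun t => (if x < t then (1:ℝ) else 0) * haar1 j m t) (Set.Icc 0 1) ∧
    ∫ t in Set.Icc (0:ℝ) 1, (if x < t then (1:ℝ) else 0) * haar1 j m t =
      - (tentT (2 ^ j * x - m) / 2 ^ j) := by
  have hf : IntegrableOn (fun t => if x < t then (1:ℝ) else 0) (Set.Icc 0 1) := by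
    have e : (fun t => if x < t then (1:ℝ) else 0) = (Set.Ioi x).indicator 1 := by
      funext t; simp [Set.indicator]
    rw [e]
    apply IntegrableOn.indicator _ measurableSet_Ioi
    exact integrableOn_const (C := (1:ℝ)) (by simp)
  obtain ⟨h1, h2⟩ := integral_haar j m hm _ hf
  refine ⟨h1, ?_⟩
  have hp : (0:ℝ) < 2 ^ j := by positivity
  rw [h2, integral_step _ _ _ (by gcongr; linarith), integral_step _ _ _ (by gcongr; linarith)]
  have hmax : ∀ u : ℝ, max u 0 / 2 ^ j = max (u / 2 ^ j) 0 := by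
    intro u; rw [max_div_div_right hp.le u 0 |>.symm, zero_div]
  unfold tentT
  have e1 : (1 - (2 ^ j * x - m)) / 2 ^ j = (2 * m + 2 : ℝ) / 2 ^ (j + 1) - x := by
    rw [pow_succ]; field_simp; ring
  have e2 : (-(2 ^ j * x - m)) / 2 ^ j = (2 * m : ℝ) / 2 ^ (j + 1) - x := by
    rw [pow_succ]; field_simp; ring
  have e3 : (1/2 - (2 ^ j * x - m)) / 2 ^ j = (2 * m + 1 : ℝ) / 2 ^ (j + 1) - x := by
    rw [pow_succ]; field_simp; ring
  rw [← e1, ← e2, ← e3, ← hmax, ← hmax, ← hmax]; ring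

lemma int_id (j m : ℕ) (hm : m < 2 ^ j) :
    IntegrableOn (fun t => t * haar1 j m t) (Set.Icc 0 1) ∧
    ∫ t in Set.Icc (0:ℝ) 1, t * haar1 j m t = - (1 / (4 * (2 ^ j) ^ 2)) := by
  obtain ⟨h1, h2⟩ := integral_haar j m hm (fun t => t) continuous_id.continuousOn.integrableOn_Icc
  refine ⟨h1, ?_⟩
  rw [h2, integral_id' _ _ (by gcongr; linarith), integral_id' _ _ (by gcongr; linarith), pow_succ]
  field_simp; ring

lemma Icc_prod' : Set.Icc (0 : ℝ × ℝ) 1 = Set.Icc (0:ℝ) 1 ×ˢ Set.Icc (0:ℝ) 1 := by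
  rw [Set.Icc_prod_Icc]; rfl

lemma int_prod (f g : ℝ → ℝ) (hf : IntegrableOn f (Set.Icc 0 1)) (hg : IntegrableOn g (Set.Icc 0 1)) :
    IntegrableOn (fun z : ℝ × ℝ => f z.1 * g z.2) (Set.Icc 0 1) ∧
    ∫ z in Set.Icc (0 : ℝ × ℝ) 1, f z.1 * g z.2 =
      (∫ t in Set.Icc (0:ℝ) 1, f t) * ∫ t in Set.Icc (0:ℝ) 1, g t := by
  rw [Icc_prod', Measure.volume_eq_prod]
  refine ⟨?_, setIntegral_prod_mul f g _ _⟩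
  unfold IntegrableOn
  rw [← Measure.prod_restrict]
  exact Integrable.mul_prod hf hg

lemma haarCoeff_eq {ι : Type*} [Fintype ι] (P : ι → ℝ × ℝ) (hP : ∀ k, 0 ≤ (P k).1 ∧ 0 ≤ (P k).2)
    (j1 j2 m1 m2 : ℕ) (hm1 : m1 < 2 ^ j1) (hm2 : m2 < 2 ^ j2) :
    haarCoeff P ((j1 : ℤ), (j2 : ℤ)) (m1, m2) =
      (∑ k, tentT (2 ^ j1 * (P k).1 - m1) * tentT (2 ^ j2 * (P k).2 - m2)) /
        (2 ^ j1 * 2 ^ j2 * Fintype.card ι) - 1 / (16 * (2 ^ j1 * 2 ^ j2) ^ 2) := by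
  have e : ∀ t : ℝ × ℝ, localDisc P t * haar2 ((j1 : ℤ), (j2 : ℤ)) (m1, m2) t =
      (∑ k, (((if (P k).1 < t.1 then (1:ℝ) else 0) * haar1 j1 m1 t.1) *
        ((if (P k).2 < t.2 then (1:ℝ) else 0) * haar1 j2 m2 t.2))) / Fintype.card ι
      - (t.1 * haar1 j1 m1 t.1) * (t.2 * haar1 j2 m2 t.2) := by
    intro t
    have hc : (countIn P t : ℝ) = ∑ k, (if (P k).1 < t.1 then (1:ℝ) else 0) * (if (P k).2 < t.2 then (1:ℝ) else 0) := by
      unfold countIn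
      rw [Finset.card_filter]
      push_cast
      apply Finset.sum_congr rfl
      intro k _
      simp only [(hP k).1, (hP k).2, true_and, ite_and]
      split_ifs <;> simp
    unfold localDisc haar2
    have : (∑ k, (((if (P k).1 < t.1 then (1:ℝ) else 0) * haar1 j1 m1 t.1) *
        ((if (P k).2 < t.2 then (1:ℝ) else 0) * haar1 j2 m2 t.2))) =
        countIn P t * (haar1 j1 m1 t.1 * haar1 j2 m2 t.2) := by
      rw [hc, Finset.sum_mul]
      apply Finset.sum_congr rfl; intros; ring
    rw [this]; ring
  unfold haarCoeff
  simp only [e]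
  have hk := fun k => int_prod _ _ (int_step j1 m1 hm1 (P k).1).1 (int_step j2 m2 hm2 (P k).2).1
  have hi := int_prod _ _ (int_id j1 m1 hm1).1 (int_id j2 m2 hm2).1
  rw [integral_sub _ hi.1, integral_div, integral_finsetSum _ (fun k _ => (hk k).1), hi.2]
  · simp only [(hk _).2, (int_step j1 m1 hm1 _).2, (int_step j2 m2 hm2 _).2, (int_id j1 m1 hm1).2,
      (int_id j2 m2 hm2).2]
    congr 1
    · rw [← div_div]
      congr 1
      rw [Finset.sum_div]
      apply Finset.sum_congr rfl; intros; field_simp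
    · field_simp; norm_num
  · exact (integrable_finsetSum _ (fun k _ => (hk k).1)).div_const _

/-- Haar coefficients of the local discrepancy of `R_{n,σ}` for `j ∈ ℕ₀²`
with `j₁ + j₂ < n - 1`: `|μ_{j,m}| = 2^{-2(n+1)}`. -/
theorem statement4 (n : ℕ) (hn : 0 < n) (σ : Fin n → Bool)
    (j1 j2 : ℕ) (hj : j1 + j2 + 1 < n)
    (m1 m2 : ℕ) (hm1 : m1 < 2 ^ j1) (hm2 : m2 < 2 ^ j2) :
    |haarCoeff (hammersleyShifted n σ) ((j1 : ℤ), (j2 : ℤ)) (m1, m2)| =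
      1 / 2 ^ (2 * (n + 1)) := by
  obtain ⟨k, rfl⟩ : ∃ k, n = k + 2 + j1 + j2 := ⟨n - 2 - j1 - j2, by omega⟩
  have h := core j1 j2 k _ rfl σ m1 m2 hm1 hm2 0 0 le_rfl zero_le_one le_rfl zero_le_one
  rw [haarCoeff_eq _ (fun t => ⟨HX_nonneg _ t, HY_nonneg _ σ t⟩) j1 j2 m1 m2 hm1 hm2]
  simp only [zero_div, add_zero] at h
  change |(∑ t, tentT (2 ^ j1 * HX _ t - m1) * tentT (2 ^ j2 * HY _ σ t - m2)) / _ - _| = _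
  generalize (∑ t, tentT (2 ^ j1 * HX _ t - m1) * tentT (2 ^ j2 * HY _ σ t - m2)) = S at h
  simp only [Fintype.card_fun, Fintype.card_bool, Fintype.card_fin, Nat.cast_pow, Nat.cast_ofNat]
  have e : S / (2 ^ j1 * 2 ^ j2 * 2 ^ (k + 2 + j1 + j2)) - 1 / (16 * (2 ^ j1 * 2 ^ j2) ^ 2) =
      (S - 2 ^ k / 4) / (2 ^ j1 * 2 ^ j2 * 2 ^ (k + 2 + j1 + j2)) := by
    simp only [pow_add]; field_simp; ring
  rw [e, abs_div, h, abs_of_pos (show (0:ℝ) < 2 ^ j1 * 2 ^ j2 * 2 ^ (k + 2 + j1 + j2) by positivity),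
    div_div]
  congr 1
  simp only [← pow_add]
  congr 1; ring
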